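/- Let N ≥ 1 and consider the affinity dynamics of a single task over N agents with a greedy (max-affinity) assignment sequence σ. Then σ never repeats an agent within any window of N consecutive cycles: for all cycles t < s with s < t + N, we have σ t ≠ σ s. -/

import Mathlib

/-- Affinity dynamics of a single task over `N` agents with assignment
sequence `σ`: initially all affinities are 1; the assigned agent's affinity
is reset to 1, every other agent's affinity is incremented. -/
def affinity {N : ℕ} (σ : ℕ → Fin N) : ℕ → Fin N → ℕ
  | 0, _ => 1
  | k + 1, i => if σ k = i then 1 else affinity σ k i + 1

/-- Affinity pressure of the task at cycle `k`. -/
def AP {N : ℕ} (σ : ℕ → Fin N) (k : ℕ) : ℚ :=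
  (∑ i : Fin N, (affinity σ k i : ℚ)) / N - (N + 1) / 2

/-- `σ` is greedy (max-affinity): at every cycle the assigned agent has
maximal affinity. -/
def Greedy {N : ℕ} (σ : ℕ → Fin N) : Prop :=
  ∀ k i, affinity σ k i ≤ affinity σ k (σ k)

/-!
An agent assigned at cycle `t` restarts from affinity 1, so at cycle `s > t` its affinity is at most
`s - t`. If `s < t + N`, the cycles `t, …, s - 1` are too few to serve all `N` agents, and an agent
left out throughout has affinity at least `s - t + 1` at cycle `s`. Hence the agent assigned at `t`
is not maximal at `s`.
-/

theorem exists_forall_lt_ne_of_lt_card {α : Type*} [Fintype α] (f : ℕ → α) {d : ℕ}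
    (hd : d < Fintype.card α) : ∃ a, ∀ m < d, f m ≠ a := by
  classical
  have hcard : ((Finset.range d).image f).card < Fintype.card α :=
    Finset.card_image_le.trans_lt (by rwa [Finset.card_range])
  obtain ⟨a, -, ha⟩ := Finset.exists_mem_notMem_of_card_lt_card hcard
  exact ⟨a, fun m hm hma => ha (Finset.mem_image.2 ⟨m, Finset.mem_range.2 hm, hma⟩)⟩

section

variable {N : ℕ} (σ : ℕ → Fin N)

theorem affinity_succ_self (k : ℕ) : affinity σ (k + 1) (σ k) = 1 :=
  if_pos rfl

variable {σ}

theorem affinity_succ_of_ne {k : ℕ} {i : Fin N} (h : σ k ≠ i) :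
    affinity σ (k + 1) i = affinity σ k i + 1 :=
  if_neg h

variable (σ)

theorem affinity_pos (k : ℕ) (i : Fin N) : 0 < affinity σ k i := by
  cases k with
  | zero => exact Nat.one_pos
  | succ k =>
    by_cases h : σ k = i
    · rw [← h, affinity_succ_self]
      exact Nat.one_pos
    · rw [affinity_succ_of_ne h]
      exact Nat.succ_pos _

theorem affinity_succ_le (k : ℕ) (i : Fin N) : affinity σ (k + 1) i ≤ affinity σ k i + 1 := by
  by_cases h : σ k = i
  · rw [← h, affinity_succ_self]
    exact Nat.le_add_left _ _
  · exact (affinity_succ_of_ne h).le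

theorem affinity_add_le (k d : ℕ) (i : Fin N) : affinity σ (k + d) i ≤ affinity σ k i + d := by
  induction d with
  | zero => exact le_rfl
  | succ d ih => exact (affinity_succ_le σ (k + d) i).trans (Nat.succ_le_succ ih)

variable {σ}

theorem affinity_add_of_forall_ne {k d : ℕ} {i : Fin N} (h : ∀ m < d, σ (k + m) ≠ i) :
    affinity σ (k + d) i = affinity σ k i + d := by
  induction d with
  | zero => rfl
  | succ d ih =>
    rw [← add_assoc, affinity_succ_of_ne (h d d.lt_succ_self),
      ih fun m hm => h m (hm.trans d.lt_succ_self), add_assoc]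

theorem greedy_no_repeat_in_window_general {s t : ℕ} {i : Fin N}
    (hmax : ∀ j, affinity σ s j ≤ affinity σ s i) (hts : t < s) (hst : s < t + N) : σ t ≠ i := by
  rintro rfl
  obtain ⟨d, rfl⟩ : ∃ d, s = t + 1 + d := Nat.exists_eq_add_of_le hts
  obtain ⟨j, hj⟩ : ∃ j, ∀ m < 1 + d, σ (t + m) ≠ j :=
    exists_forall_lt_ne_of_lt_card (fun m => σ (t + m)) (by rw [Fintype.card_fin]; omega)
  have hlt : affinity σ (t + 1 + d) (σ t) < affinity σ (t + 1 + d) j :=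
    calc
      affinity σ (t + 1 + d) (σ t) ≤ affinity σ (t + 1) (σ t) + d := affinity_add_le σ (t + 1) d _
      _ = 1 + d := by rw [affinity_succ_self]
      _ < affinity σ t j + (1 + d) := Nat.lt_add_of_pos_left (affinity_pos σ t j)
      _ = affinity σ (t + 1 + d) j := by rw [add_assoc t, affinity_add_of_forall_ne hj]
  exact hlt.not_ge (hmax j)

end

theorem greedy_no_repeat_in_window {N : ℕ} (hN : 1 ≤ N) (σ : ℕ → Fin N)
    (hσ : Greedy σ) : ∀ t s, t < s → s < t + N → σ t ≠ σ s :=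
  fun _ s hts hst => greedy_no_repeat_in_window_general (hσ s) hts hst
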